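/- Let p be a prime, ε ∈ ℝ, f an integer with 1 ≤ f ≤ p−1, and r an integer with 2 ≤ r ≤ p−1. Then there exists at least one point x of the constellation Λ_p such that | ( f·x + ε·x − ε·(r·x)* )* | ≥ (L/p)·| ε mod [−1/4, 1/4) |. -/

import Mathlib

open MeasureTheory ProbabilityTheory Real Filter
open scoped ENNReal

noncomputable section

/-- Reduction of `x` modulo the half-open interval `[a, b)`. -/
def modIco (a b x : ℝ) : ℝ := a + (b - a) * Int.fract ((x - a) / (b - a))

/-- `L = √12`. -/
def Lc : ℝ := Real.sqrt 12

/-- `x*`: reduction of `x` modulo the basic interval `I = [-L/2, L/2)`. -/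
def starI (x : ℝ) : ℝ := modIco (-(Lc / 2)) (Lc / 2) x

/-- `δ(p, γ) = min_{l ∈ {1,…,p−1}} |l·γ − ⌊l·γ⌉|`. -/
def deltaP (p : ℕ) (γ : ℝ) : ℝ :=
  sInf {d : ℝ | ∃ l : ℕ, 1 ≤ l ∧ l ≤ p - 1 ∧ d = |(l : ℝ) * γ - round ((l : ℝ) * γ)|}

/-- The set `P'(γ)` of admissible primes (depends on the SNR). -/
def Pgood (SNR : ℝ) (γ : ℝ) : Set ℕ :=
  {p | p.Prime ∧
    Real.exp (-(3 * SNR / (2 * (p : ℝ) ^ 2)) * (modIco (-(1/4)) (1/4) γ) ^ 2) <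
      1 - 2 * (p : ℝ) * Real.exp (-(3 * SNR / 8))}

/-- First rate expression in the achievable-rate theorem. -/
def rateA (SNR : ℝ) (p : ℕ) (γ : ℝ) : ℝ :=
  -(1/2) * Real.logb 2 (1/(p : ℝ)^2 + Real.sqrt (2 * π / (3 * SNR))
    + (1/(p : ℝ)) * Real.exp (-(3 * SNR / (2 * (p : ℝ)^2)) * (deltaP p γ)^2)
    + 2 * Real.exp (-(3 * SNR / 8)))

/-- Second rate expression in the achievable-rate theorem. -/
def rateB (SNR : ℝ) (p : ℕ) (γ : ℝ) : ℝ :=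
  -Real.logb 2 (1/(p : ℝ) + Real.sqrt (2 * π / (3 * (deltaP p γ)^2 * SNR))
    + 2 * Real.exp (-(3 * SNR / 8)))

/-- The `k`-th point of the constellation `Λ_p`. -/
def constPt (p : ℕ) (k : ℕ) : ℝ := starI (Lc / (p : ℝ) * (k : ℝ))

/-- The constellation `Λ_p` as a finite set of reals. -/
def constSet (p : ℕ) : Finset ℝ := (Finset.range p).image (constPt p)

/-- The uniform probability measure on the constellation `Λ_p`. -/
def uniformConst (p : ℕ) : Measure ℝ :=
  (p : ℝ≥0∞)⁻¹ • ∑ k ∈ Finset.range p, Measure.dirac (constPt p k)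

theorem modIco_spec (a b x : ℝ) (h : a < b) :
    ∃ n : ℤ, modIco a b x = x - (b - a) * n ∧ a ≤ modIco a b x ∧ modIco a b x < b := by
  have hb : 0 < b - a := by linarith
  refine ⟨⌊(x - a) / (b - a)⌋, ?_, ?_, ?_⟩
  · unfold modIco
    rw [Int.fract]
    field_simp
    ring
  · unfold modIco
    nlinarith [Int.fract_nonneg ((x - a) / (b - a))]
  · unfold modIco
    nlinarith [Int.fract_lt_one ((x - a) / (b - a))]

theorem Lc_pos : 0 < Lc := Real.sqrt_pos.mpr (by norm_num)

theorem starI_spec (x : ℝ) :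
    ∃ n : ℤ, starI x = x - Lc * n ∧ -(Lc / 2) ≤ starI x ∧ starI x < Lc / 2 := by
  have hL := Lc_pos
  obtain ⟨n, h1, h2, h3⟩ := modIco_spec (-(Lc/2)) (Lc/2) x (by linarith)
  refine ⟨n, ?_, h2, h3⟩
  unfold starI
  rw [h1]; ring

theorem quarter_le (ε : ℝ) (i : ℤ) : |modIco (-(1/4)) (1/4) ε| ≤ |ε - i / 2| := by
  obtain ⟨n, h1, h2, h3⟩ := modIco_spec (-(1/4)) (1/4) ε (by norm_num)
  by_cases h : i = n
  · rw [h1, h]; apply le_of_eq; congr 1; ring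
  · have hm : |modIco (-(1/4)) (1/4) ε| ≤ 1/4 := abs_le.mpr ⟨by linarith, by linarith⟩
    refine hm.trans ?_
    rcases lt_or_gt_of_ne h with h | h
    · have : (i : ℝ) + 1 ≤ n := by exact_mod_cast h
      refine le_trans ?_ (le_abs_self _)
      linarith
    · have : (n : ℝ) + 1 ≤ i := by exact_mod_cast h
      refine le_trans ?_ (neg_le_abs _)
      linarith

/-- centred residues -/
theorem starI_scaled (p : ℕ) (hp : 0 < p) (z : ℤ) :
    ∃ a j : ℤ, starI (Lc / p * z) = Lc / p * a ∧ a = z - p * j ∧ -(p:ℤ) ≤ 2 * a ∧ 2 * a < p := by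
  have hL := Lc_pos
  have hp' : (0:ℝ) < p := by exact_mod_cast hp
  obtain ⟨n, h1, h2, h3⟩ := starI_spec (Lc / p * z)
  have e : starI (Lc / p * z) = Lc / p * ((z - p * n : ℤ) : ℝ) := by
    rw [h1]; push_cast; field_simp
  refine ⟨z - p * n, n, e, rfl, ?_, ?_⟩
  · rw [e] at h2
    have : -(p:ℝ) ≤ 2 * ((z - p * n : ℤ) : ℝ) := by
      by_contra hc
      push Not at hc
      have := mul_lt_mul_of_pos_left hc (div_pos hL hp')
      have e2 : Lc / p * (-(p:ℝ)) = - Lc := by field_simp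
      linarith
    exact_mod_cast this
  · rw [e] at h3
    have : 2 * ((z - p * n : ℤ) : ℝ) < p := by
      by_contra hc
      push Not at hc
      have := mul_le_mul_of_nonneg_left hc (div_pos hL hp').le
      have e2 : Lc / p * (p:ℝ) = Lc := by field_simp
      linarith
    exact_mod_cast this

theorem constPt_small (p k : ℕ) (h : 2 * k < p) : constPt p k = Lc / p * k := by
  obtain ⟨a, j, h1, h2, h3, h4⟩ := starI_scaled p (by omega) k
  have hj : j = 0 := by
    have : -(1:ℤ) < j := by
      by_contra hc
      nlinarith
    have : j < (1:ℤ) := by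
      by_contra hc
      nlinarith
    omega
  subst hj
  have : a = k := by simpa using h2
  subst this
  unfold constPt
  simpa using h1

/-- **Existence of a large point (Case D4).** For a prime `p`, `f ∈ {1,…,p−1}` and
`r ∈ {2,…,p−1}`, there is a constellation point `x ∈ Λ_p` with
`|(f·x + ε·x − ε·(r·x)*)*| ≥ (L/p)·|ε mod [−1/4,1/4)|`. -/
theorem exists_large_point
    (p : ℕ) (hp : p.Prime) (ε : ℝ)
    (f : ℕ) (hf1 : 1 ≤ f) (hf2 : f ≤ p - 1)
    (r : ℕ) (hr1 : 2 ≤ r) (hr2 : r ≤ p - 1) :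
    ∃ x ∈ constSet p,
      (Lc / (p : ℝ)) * |modIco (-(1/4)) (1/4) ε|
        ≤ |starI ((f : ℝ) * x + ε * x - ε * starI ((r : ℝ) * x))| := by
  have hL := Lc_pos
  have hp3 : 3 ≤ p := by omega
  have hp0 : (0:ℝ) < p := by exact_mod_cast hp.pos
  obtain ⟨n, hn⟩ : ∃ n, p = 2 * n + 1 := hp.odd_of_ne_two (by omega)
  by_contra hcon
  push Not at hcon
  set d := |modIco (-(1/4)) (1/4) ε| with hd
  have hq := quarter_le ε
  rw [← hd] at hq
  choose a j ha hj hlo hhi using fun k : ℕ => starI_scaled p hp.pos ((r * k : ℕ) : ℤ)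
  have key : ∀ k ≤ n, ∃ c : ℤ, |(f * k + ε * (k - a k)) - p * c| < d := by
    intro k hk
    have hx := hcon (constPt p k)
      (Finset.mem_image_of_mem _ (Finset.mem_range.mpr (by omega)))
    rw [constPt_small p k (by omega)] at hx
    have e1 : starI ((r:ℝ) * (Lc / p * k)) = Lc / p * a k := by
      rw [← ha k]; congr 1; push_cast; ring
    rw [e1] at hx
    obtain ⟨c, hc, -, -⟩ := starI_spec ((f:ℝ) * (Lc / p * k) + ε * (Lc / p * k) - ε * (Lc / p * a k))
    refine ⟨c, ?_⟩
    have e2 : starI ((f:ℝ) * (Lc / p * k) + ε * (Lc / p * k) - ε * (Lc / p * a k))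
        = Lc / p * ((f * k + ε * (k - a k)) - p * c) := by
      rw [hc]; field_simp; ring
    rw [e2, abs_mul, abs_of_pos (div_pos hL hp0)] at hx
    exact lt_of_mul_lt_mul_left hx (div_pos hL hp0).le
  obtain ⟨c1, hc1⟩ := key 1 (by omega)
  have a1eq := hj 1
  have a1lo := hlo 1
  have a1hi := hhi 1
  have hn0 : 1 ≤ n := by omega
  by_cases hm1 : a 1 = -1
  · have h := hq (p * c1 - f)
    rw [hm1] at hc1
    have e : (f * (1:ℕ) + ε * ((1:ℕ) - ((-1 : ℤ) : ℝ))) - p * c1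
        = 2 * (ε - ((p * c1 - f : ℤ) : ℝ) / 2) := by
      push_cast; ring
    rw [e, abs_mul, abs_two] at hc1
    have := abs_nonneg (ε - ((p * c1 - f : ℤ) : ℝ) / 2)
    linarith
  have hne0 : a 1 ≠ 0 := by
    intro h0
    rw [h0] at a1eq
    have hdvd : (p:ℤ) ∣ (r:ℤ) := ⟨j 1, by push_cast at a1eq; linarith⟩
    have := Int.le_of_dvd (by omega) hdvd
    omega
  have hne1 : a 1 ≠ 1 := by
    intro h0
    rw [h0] at a1eq
    have hdvd : (p:ℤ) ∣ (r:ℤ) - 1 := ⟨j 1, by push_cast at a1eq; linarith⟩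
    have := Int.le_of_dvd (by omega) hdvd
    omega
  have hwrap : ∃ k, k + 1 ≤ n ∧ a (k+1) ≠ a k + a 1 := by
    by_contra hno
    push Not at hno
    have hz : a 0 = 0 := by
      have h0 := hj 0
      have h1 := hlo 0
      have h2 := hhi 0
      have : j 0 = 0 := by
        have : -(1:ℤ) < j 0 := by
          by_contra hc
          push_cast at h0
          nlinarith
        have : j 0 < (1:ℤ) := by
          by_contra hc
          push_cast at h0
          nlinarith
        omega
      rw [this] at h0
      simpa using h0
    have hall : ∀ k, k ≤ n → a k = k * a 1 := by
      intro k
      induction k with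
      | zero => intro _; simp [hz]
      | succ k ih =>
        intro hk
        rw [hno k hk, ih (by omega)]
        push_cast; ring
    have hN := hall n le_rfl
    have h1 := hlo n
    have h2 := hhi n
    have hnz : (1:ℤ) ≤ n := by exact_mod_cast hn0
    have hpz : (p:ℤ) = 2 * n + 1 := by exact_mod_cast hn
    rcases (by omega : a 1 ≤ -2 ∨ 2 ≤ a 1) with h | h
    · have : (n:ℤ) * a 1 ≤ n * (-2) := mul_le_mul_of_nonneg_left h (by omega)
      have : n = 1 := by omega
      subst this
      omega
    · have : (n:ℤ) * 2 ≤ n * a 1 := mul_le_mul_of_nonneg_left h (by omega)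
      omega
  obtain ⟨k, hk, hw⟩ := hwrap
  obtain ⟨c2, hc2⟩ := key k (by omega)
  obtain ⟨c3, hc3⟩ := key (k+1) hk
  obtain ⟨s, hs, hs1⟩ : ∃ s : ℤ, a (k+1) - a k - a 1 = p * s ∧ (s = 1 ∨ s = -1) := by
    have e : a (k+1) - a k - a 1 = p * (j k + j 1 - j (k+1)) := by
      rw [hj (k+1), hj k, hj 1]; push_cast; ring
    refine ⟨_, e, ?_⟩
    generalize j k + j 1 - j (k+1) = s at e
    have := hlo k
    have := hhi k
    have := hlo (k+1)
    have := hhi (k+1)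
    have hpz : (0:ℤ) < p := by exact_mod_cast hp.pos
    have h0 : s ≠ 0 := by
      rintro rfl
      apply hw
      linarith
    have h1 : s < 2 := by
      by_contra hc
      nlinarith
    have h2 : -2 < s := by
      by_contra hc
      nlinarith
    omega
  have hsR : (a (k+1) : ℝ) = a k + a 1 + p * s := by
    have : a (k+1) = a k + a 1 + p * s := by linarith
    exact_mod_cast this
  have h3 : |(p:ℝ) * (-(ε * s) - (c3 - c2 - c1))| < 3 * d := by
    have e : (p:ℝ) * (-(ε * s) - (c3 - c2 - c1)) =
        ((f * ((k+1 : ℕ):ℝ) + ε * (((k+1 : ℕ):ℝ) - a (k+1))) - p * c3)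
        - ((f * k + ε * (k - a k)) - p * c2)
        - ((f * ((1:ℕ):ℝ) + ε * (((1:ℕ):ℝ) - a 1)) - p * c1) := by
      rw [hsR]; push_cast; ring
    rw [e]
    rw [abs_lt] at *
    constructor <;> linarith [hc1.1, hc1.2, hc2.1, hc2.2, hc3.1, hc3.2]
  rw [abs_mul, abs_of_pos hp0] at h3
  have h4 : d ≤ |-(ε * s) - ((c3:ℝ) - c2 - c1)| := by
    rcases hs1 with rfl | rfl
    · refine (hq (-2 * (c3 - c2 - c1))).trans (le_of_eq ?_)
      rw [← abs_neg]; congr 1; push_cast; ring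
    · refine (hq (2 * (c3 - c2 - c1))).trans (le_of_eq ?_)
      congr 1; push_cast; ring
  have h5 : (3:ℝ) ≤ p := by exact_mod_cast hp3
  have h6 := mul_le_mul h5 h4 (abs_nonneg _) hp0.le
  linarith
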